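/- Let W be a 7-dimensional k-vector space, λ a 4-form on W, and w ∈ W, and suppose there is a basis e0,…,e6 of W with w = e0 such that λ(e0,e1,e2,e3) = λ(e0,e4,e5,e6) = λ(e1,e2,e5,e6) = λ(e1,e3,e4,e6) = λ(e2,e3,e4,e5) = 1 and λ vanishes on every other increasing quadruple of basis vectors (i.e. λ = x0123 + x0456 + x1256 + x1346 + x2345, the standard form of a general 4-form, with w off the associated quadric). Let w∨ ∈ W∨ be defined by w∨(e0) = 1 and w∨(ei) = 0 for i ≥ 1, let W̄ = ker w∨, set λ̄ := λ(w,·,·,·) (a 3-form) and λ' := λ − w∨∧λ̄, where (w∨∧λ̄)(v1,v2,v3,v4) := Σᵢ (−1)^{i+1} w∨(vi) λ̄(v1,…,v̂i,…,v4). Then: (1) there is a direct sum decomposition W̄ = A1 ⊕ A2 with dim A1 = dim A2 = 3 and 3-forms λ̄1, λ̄2 on W̄, both nonzero, with λ̄1 vanishing whenever an argument lies in A1, λ̄2 vanishing whenever an argument lies in A2, and λ̄|_{W̄} = λ̄1 + λ̄2 (so λ̄ restricted to W̄ is a general 3-form); (2) λ'(u1,u2,u3,v) = 0 for all v ∈ W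 whenever u1,u2,u3 all lie in A1 or all lie in A2 (λ' annihilates ∧³A1 and ∧³A2); (3) λ' defines a nondegenerate pairing between ∧²A1 and ∧²A2: for every 2-dimensional subspace B1 ⊆ A1 with basis b,b' there exist b2,b2' ∈ A2 with λ'(b,b',b2,b2') ≠ 0, and for every 2-dimensional B2 ⊆ A2 with basis c,c' there exist c1,c1' ∈ A1 with λ'(c1,c1',c,c') ≠ 0. -/

import Mathlib

open Module

/-!
Write `x_I` for the `n`-form on `W` given by the minor of coordinates with index tuple `I`. An
alternating map is determined by its values on increasing tuples of basis vectors
(`ext_alternating_strictMono`), and the forms `x_I` with `I` increasing are dual to these tuples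
(`minorForm_basis`). Hence `λ = x0123 + x0456 + x1256 + x1346 + x2345` (`eq_sum_minorForm`).

Since `w = e0` and `w∨ = x0`, contraction gives `λ̄ = x123 + x456`, and removing
`w∨ ∧ λ̄ = x0123 + x0456` leaves `λ' = x1256 + x1346 + x2345`. Take `A1 = ⟨e1, e2, e3⟩` and
`A2 = ⟨e4, e5, e6⟩`, with `λ̄1 = x456` and `λ̄2 = x123`. Each term of `λ'` has two indices in
`{1, 2, 3}` and two in `{4, 5, 6}`, so `λ'` kills `⋀³A1` and `⋀³A2`. On `⋀²A1 × ⋀²A2` it is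
`x12 x56 + x13 x46 + x23 x45`, which pairs the coordinates `x12, x13, x23` of `⋀²A1` perfectly with
the coordinates `x56, x46, x45` of `⋀²A2`. Nondegeneracy on decomposable bivectors follows because
two independent vectors have a nonzero `2 × 2` minor (`exists_minor_ne_zero`).
-/

section Aux

variable {k W : Type*} [Field k] [AddCommGroup W] [Module k W]

/-- The `n`-form `x_{s 0} ∧ ⋯ ∧ x_{s (n-1)}` in the coordinates of the basis `e`, normalised so
that its value on `v` is the determinant of the matrix with entries `x_{s j} (v i)`. -/
noncomputable def minorForm (e : Basis (Fin 7) k W) {n : ℕ} (s : Fin n → Fin 7) :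
    AlternatingMap k W k (Fin n) :=
  (Matrix.detRowAlternating (R := k) (n := Fin n)).compLinearMap
    (LinearMap.pi fun j => e.coord (s j))

lemma minorForm_apply (e : Basis (Fin 7) k W) {n : ℕ} (s : Fin n → Fin 7) (v : Fin n → W) :
    minorForm e s v = Matrix.det (Matrix.of fun i j => e.repr (v i) (s j)) := rfl

lemma minorForm_three (e : Basis (Fin 7) k W) (a b c : Fin 7) (v1 v2 v3 : W) :
    minorForm e ![a, b, c] ![v1, v2, v3] =
      e.repr v1 a * (e.repr v2 b * e.repr v3 c - e.repr v2 c * e.repr v3 b) -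
      e.repr v1 b * (e.repr v2 a * e.repr v3 c - e.repr v2 c * e.repr v3 a) +
      e.repr v1 c * (e.repr v2 a * e.repr v3 b - e.repr v2 b * e.repr v3 a) := by
  rw [minorForm_apply, Matrix.det_fin_three]
  simp
  ring

/-- Laplace expansion of a `4 × 4` minor along the first two rows. -/
lemma minorForm_four (e : Basis (Fin 7) k W) (a b c d : Fin 7) (v1 v2 v3 v4 : W) :
    minorForm e ![a, b, c, d] ![v1, v2, v3, v4] =
      (e.repr v1 a * e.repr v2 b - e.repr v1 b * e.repr v2 a) *
        (e.repr v3 c * e.repr v4 d - e.repr v3 d * e.repr v4 c) -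
      (e.repr v1 a * e.repr v2 c - e.repr v1 c * e.repr v2 a) *
        (e.repr v3 b * e.repr v4 d - e.repr v3 d * e.repr v4 b) +
      (e.repr v1 a * e.repr v2 d - e.repr v1 d * e.repr v2 a) *
        (e.repr v3 b * e.repr v4 c - e.repr v3 c * e.repr v4 b) +
      (e.repr v1 b * e.repr v2 c - e.repr v1 c * e.repr v2 b) *
        (e.repr v3 a * e.repr v4 d - e.repr v3 d * e.repr v4 a) -
      (e.repr v1 b * e.repr v2 d - e.repr v1 d * e.repr v2 b) *
        (e.repr v3 a * e.repr v4 c - e.repr v3 c * e.repr v4 a) +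
      (e.repr v1 c * e.repr v2 d - e.repr v1 d * e.repr v2 c) *
        (e.repr v3 a * e.repr v4 b - e.repr v3 b * e.repr v4 a) := by
  rw [minorForm_apply]
  simp [Matrix.det_succ_row_zero, Fin.sum_univ_succ, Fin.succAbove]
  ring

/-- An alternating map is determined by its values on increasing tuples of basis vectors, because
an injective tuple of indices can be sorted at the cost of a sign. -/
lemma ext_alternating_strictMono (e : Basis (Fin 7) k W) {n : ℕ}
    {f g : AlternatingMap k W k (Fin n)}
    (h : ∀ t : Fin n → Fin 7, StrictMono t → f (fun i => e (t i)) = g (fun i => e (t i))) :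
    f = g := by
  refine Basis.ext_alternating e fun v hv => ?_
  have hs : StrictMono (v ∘ Tuple.sort v) :=
    (Tuple.monotone_sort v).strictMono_of_injective (hv.comp (Tuple.sort v).injective)
  have h1 := h _ hs
  have h2 := f.map_perm (fun i => e (v i)) (Tuple.sort v)
  have h3 := g.map_perm (fun i => e (v i)) (Tuple.sort v)
  have h4 : Equiv.Perm.sign (Tuple.sort v) • f (fun i => e (v i)) =
      Equiv.Perm.sign (Tuple.sort v) • g (fun i => e (v i)) :=
    h2.symm.trans (h1.trans h3)
  exact smul_left_cancel _ h4

lemma minorForm_basis (e : Basis (Fin 7) k W) {n : ℕ} {s t : Fin n → Fin 7}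
    (hs : StrictMono s) (ht : StrictMono t) :
    minorForm e s (fun i => e (t i)) = if t = s then 1 else 0 := by
  rw [minorForm_apply]
  split_ifs with h
  · subst h
    convert Matrix.det_one (n := Fin n) (R := k) using 2
    ext i j
    simp [Matrix.one_apply, Finsupp.single_apply, ht.injective.eq_iff]
  · -- Distinct increasing tuples have distinct index sets, so the matrix has a zero row.
    have : ∃ i, ∀ j, t i ≠ s j := by
      by_contra! hc
      have hsub : Finset.univ.image t ⊆ Finset.univ.image s := by
        intro x hx
        obtain ⟨i, -, rfl⟩ := Finset.mem_image.1 hx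
        obtain ⟨j, hj⟩ := hc i
        exact Finset.mem_image.2 ⟨j, Finset.mem_univ _, hj.symm⟩
      have heq := Finset.eq_of_subset_of_card_le hsub (by
        rw [Finset.card_image_of_injective _ hs.injective,
          Finset.card_image_of_injective _ ht.injective])
      have hr : Set.range t = Set.range s := by
        simpa using congrArg (fun F : Finset (Fin 7) => (F : Set (Fin 7))) heq
      exact h ((ht.range_inj hs).1 hr)
    obtain ⟨i, hi⟩ := this
    refine Matrix.det_eq_zero_of_row_eq_zero i fun j => ?_
    simp [Finsupp.single_apply, hi j]

lemma eq_sum_minorForm (lam : AlternatingMap k W k (Fin 4)) (e : Basis (Fin 7) k W)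
    (hval : ∀ i j l m : Fin 7, i < j → j < l → l < m →
      lam ![e i, e j, e l, e m] =
        (if (i.val, j.val, l.val, m.val) = (0,1,2,3) ∨
            (i.val, j.val, l.val, m.val) = (0,4,5,6) ∨
            (i.val, j.val, l.val, m.val) = (1,2,5,6) ∨
            (i.val, j.val, l.val, m.val) = (1,3,4,6) ∨
            (i.val, j.val, l.val, m.val) = (2,3,4,5) then 1 else 0)) :
    lam = minorForm e ![0,1,2,3] + minorForm e ![0,4,5,6] + minorForm e ![1,2,5,6] +
      minorForm e ![1,3,4,6] + minorForm e ![2,3,4,5] := by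
  refine ext_alternating_strictMono e fun t ht => ?_
  have key : ∀ a b c d : Fin 7, t = ![a, b, c, d] ↔
      ((t 0).val, (t 1).val, (t 2).val, (t 3).val) = (a.val, b.val, c.val, d.val) := by
    intro a b c d
    simp [funext_iff, Fin.forall_fin_succ, Fin.ext_iff]
  have h := hval (t 0) (t 1) (t 2) (t 3) (ht (by decide)) (ht (by decide)) (ht (by decide))
  have ht4 : (fun i => e (t i)) = ![e (t 0), e (t 1), e (t 2), e (t 3)] := by
    funext i; fin_cases i <;> rfl
  simp only [AlternatingMap.add_apply]
  rw [minorForm_basis e (by decide) ht, minorForm_basis e (by decide) ht,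
    minorForm_basis e (by decide) ht, minorForm_basis e (by decide) ht,
    minorForm_basis e (by decide) ht, ht4, h]
  simp only [key]
  generalize ((t 0).val, (t 1).val, (t 2).val, (t 3).val) = q
  by_cases h1 : q = (0,1,2,3)
  · subst h1; simp
  by_cases h2 : q = (0,4,5,6)
  · subst h2; simp
  by_cases h3 : q = (1,2,5,6)
  · subst h3; simp
  by_cases h4 : q = (1,3,4,6)
  · subst h4; simp
  by_cases h5 : q = (2,3,4,5)
  · subst h5; simp
  simp [h1, h2, h3, h4, h5]

lemma exists_minor_ne_zero (e : Basis (Fin 7) k W) {b b' : W}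
    (h : LinearIndependent k ![b, b']) :
    ∃ i j, e.repr b i * e.repr b' j - e.repr b j * e.repr b' i ≠ 0 := by
  by_contra! hc
  rw [LinearIndependent.pair_iff] at h
  -- If all minors vanish, `b'ᵢ b = bᵢ b'` for every `i`, so independence forces `bᵢ = 0`.
  have hb : ∀ i, e.repr b i = 0 := fun i => by
    have := (h (e.repr b' i) (-e.repr b i) (e.repr.injective (by
      ext j
      have := hc i j
      simp
      linear_combination -this))).2
    simpa using this
  have hb0 : b = 0 := e.repr.injective (by ext i; simp [hb i])
  simpa using (h 1 0 (by simp [hb0])).1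

end Aux

/-- a general 4-form `λ` on a 7-space `W` in standard coordinates,
together with a vector `w = e0` off the quadric, induces a decomposition
`W̄ = ker w∨ = A1 ⊕ A2` such that `λ̄ = λ(w,·,·,·)` restricted to `W̄` is a general
3-form, `λ' = λ − w∨ ∧ λ̄` annihilates `⋀³A1` and `⋀³A2`, and `λ'` defines a
nondegenerate pairing between `⋀²A1` and `⋀²A2`. -/
theorem stmt_3 (k : Type*) [Field k] [CharZero k]
    (W : Type*) [AddCommGroup W] [Module k W] [FiniteDimensional k W]
    (hW : finrank k W = 7)
    (lam : AlternatingMap k W k (Fin 4))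
    (w : W) (e : Basis (Fin 7) k W) (he0 : e 0 = w)
    (hval : ∀ i j l m : Fin 7, i < j → j < l → l < m →
      lam ![e i, e j, e l, e m] =
        (if (i.val, j.val, l.val, m.val) = (0,1,2,3) ∨
            (i.val, j.val, l.val, m.val) = (0,4,5,6) ∨
            (i.val, j.val, l.val, m.val) = (1,2,5,6) ∨
            (i.val, j.val, l.val, m.val) = (1,3,4,6) ∨
            (i.val, j.val, l.val, m.val) = (2,3,4,5) then 1 else 0))
    (wdual : W →ₗ[k] k)
    (hwd0 : wdual (e 0) = 1) (hwd : ∀ i : Fin 7, i ≠ 0 → wdual (e i) = 0)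
    (lambar : W → W → W → k)
    (hlambar : ∀ v1 v2 v3 : W, lambar v1 v2 v3 = lam ![w, v1, v2, v3])
    (lam' : W → W → W → W → k)
    (hlam' : ∀ v1 v2 v3 v4 : W, lam' v1 v2 v3 v4 =
      lam ![v1, v2, v3, v4] -
        (wdual v1 * lambar v2 v3 v4 - wdual v2 * lambar v1 v3 v4 +
          wdual v3 * lambar v1 v2 v4 - wdual v4 * lambar v1 v2 v3)) :
    ∃ (A1 A2 : Submodule k W) (lam1 lam2 : AlternatingMap k W k (Fin 3)),
      -- (1) W̄ = A1 ⊕ A2 with dim A1 = dim A2 = 3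
      A1 ⊔ A2 = LinearMap.ker wdual ∧ A1 ⊓ A2 = ⊥ ∧
      finrank k A1 = 3 ∧ finrank k A2 = 3 ∧
      -- λ̄1, λ̄2 are nonzero on W̄
      (∃ v : Fin 3 → W, (∀ i, v i ∈ LinearMap.ker wdual) ∧ lam1 v ≠ 0) ∧
      (∃ v : Fin 3 → W, (∀ i, v i ∈ LinearMap.ker wdual) ∧ lam2 v ≠ 0) ∧
      -- λ̄1 vanishes when an argument lies in A1, λ̄2 when an argument lies in A2
      (∀ v : Fin 3 → W, (∀ i, v i ∈ LinearMap.ker wdual) →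
        (∃ i, v i ∈ A1) → lam1 v = 0) ∧
      (∀ v : Fin 3 → W, (∀ i, v i ∈ LinearMap.ker wdual) →
        (∃ i, v i ∈ A2) → lam2 v = 0) ∧
      -- λ̄ restricted to W̄ equals λ̄1 + λ̄2
      (∀ v1 ∈ LinearMap.ker wdual, ∀ v2 ∈ LinearMap.ker wdual,
        ∀ v3 ∈ LinearMap.ker wdual,
          lambar v1 v2 v3 = lam1 ![v1, v2, v3] + lam2 ![v1, v2, v3]) ∧
      -- (2) λ' annihilates ⋀³A1 and ⋀³A2
      (∀ u1 u2 u3 : W,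
        ((u1 ∈ A1 ∧ u2 ∈ A1 ∧ u3 ∈ A1) ∨ (u1 ∈ A2 ∧ u2 ∈ A2 ∧ u3 ∈ A2)) →
          ∀ v : W, lam' u1 u2 u3 v = 0) ∧
      -- (3) λ' gives a nondegenerate pairing between ⋀²A1 and ⋀²A2
      (∀ b b' : W, b ∈ A1 → b' ∈ A1 → LinearIndependent k ![b, b'] →
        ∃ b2 ∈ A2, ∃ b2' ∈ A2, lam' b b' b2 b2' ≠ 0) ∧
      (∀ c c' : W, c ∈ A2 → c' ∈ A2 → LinearIndependent k ![c, c'] →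
        ∃ c1 ∈ A1, ∃ c1' ∈ A1, lam' c1 c1' c c' ≠ 0) := by
  subst he0
  have hx0 : ∀ v, wdual v = e.repr v 0 := by
    have : wdual = e.coord 0 := e.ext fun i => by
      by_cases hi : i = 0
      · subst hi; simp [hwd0]
      · simp [hwd i hi, hi]
    intro v; rw [this]; rfl
  have hlam := eq_sum_minorForm lam e hval
  have hbar : ∀ v1 v2 v3, lambar v1 v2 v3 =
      minorForm e ![4,5,6] ![v1, v2, v3] + minorForm e ![1,2,3] ![v1, v2, v3] := by
    intro v1 v2 v3
    rw [hlambar, hlam]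
    simp only [AlternatingMap.add_apply, minorForm_three, minorForm_four]
    simp
    ring
  have hprime : ∀ v1 v2 v3 v4, lam' v1 v2 v3 v4 =
      minorForm e ![1,2,5,6] ![v1, v2, v3, v4] + minorForm e ![1,3,4,6] ![v1, v2, v3, v4] +
        minorForm e ![2,3,4,5] ![v1, v2, v3, v4] := by
    intro v1 v2 v3 v4
    rw [hlam', hlam]
    simp only [hbar, hx0, AlternatingMap.add_apply, minorForm_three, minorForm_four]
    ring
  have hA1 : ∀ v, v ∈ Submodule.span k (e '' {1, 2, 3}) ↔
      e.repr v 0 = 0 ∧ e.repr v 4 = 0 ∧ e.repr v 5 = 0 ∧ e.repr v 6 = 0 := by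
    intro v
    rw [e.mem_span_image]
    simp [Set.subset_def, Fin.forall_fin_succ]
  have hA2 : ∀ v, v ∈ Submodule.span k (e '' {4, 5, 6}) ↔
      e.repr v 0 = 0 ∧ e.repr v 1 = 0 ∧ e.repr v 2 = 0 ∧ e.repr v 3 = 0 := by
    intro v
    rw [e.mem_span_image]
    simp [Set.subset_def, Fin.forall_fin_succ]
  have hfin : ∀ s : Finset (Fin 7), finrank k (Submodule.span k (e '' s)) = s.card := by
    intro s
    have hli : LinearIndependent k (fun x : s => e x) :=
      e.linearIndependent.comp _ Subtype.val_injective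
    have := finrank_span_eq_card hli
    rw [Fintype.card_coe] at this
    rw [← this, Set.image_eq_range]
    rfl
  refine ⟨Submodule.span k (e '' {1, 2, 3}), Submodule.span k (e '' {4, 5, 6}),
    minorForm e ![4,5,6], minorForm e ![1,2,3], ?_, ?_, ?_, ?_, ?_, ?_, ?_, ?_, ?_, ?_, ?_, ?_⟩
  · ext v
    rw [← Submodule.span_union, ← Set.image_union, e.mem_span_image, LinearMap.mem_ker, hx0]
    simp [Set.subset_def, Fin.forall_fin_succ]
  · rw [eq_bot_iff]
    intro v hv
    obtain ⟨h0, h4, h5, h6⟩ := (hA1 v).1 hv.1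
    obtain ⟨-, h1, h2, h3⟩ := (hA2 v).1 hv.2
    refine (Submodule.mem_bot k).2 (e.repr.injective ?_)
    ext i
    fin_cases i <;> simp [h0, h1, h2, h3, h4, h5, h6]
  · have h := hfin {1, 2, 3}
    rw [Finset.coe_insert, Finset.coe_insert, Finset.coe_singleton] at h
    exact h
  · have h := hfin {4, 5, 6}
    rw [Finset.coe_insert, Finset.coe_insert, Finset.coe_singleton] at h
    exact h
  · refine ⟨fun i => e (![4,5,6] i), fun i => ?_, ?_⟩
    · fin_cases i <;> exact hwd _ (by decide)
    · rw [minorForm_basis e (by decide) (by decide)]; simp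
  · refine ⟨fun i => e (![1,2,3] i), fun i => ?_, ?_⟩
    · fin_cases i <;> exact hwd _ (by decide)
    · rw [minorForm_basis e (by decide) (by decide)]; simp
  · rintro v - ⟨i, hi⟩
    obtain ⟨-, h4, h5, h6⟩ := (hA1 _).1 hi
    rw [minorForm_apply]
    refine Matrix.det_eq_zero_of_row_eq_zero i fun j => ?_
    fin_cases j <;> assumption
  · rintro v - ⟨i, hi⟩
    obtain ⟨-, h1, h2, h3⟩ := (hA2 _).1 hi
    rw [minorForm_apply]
    refine Matrix.det_eq_zero_of_row_eq_zero i fun j => ?_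
    fin_cases j <;> assumption
  · intro v1 _ v2 _ v3 _
    exact hbar v1 v2 v3
  · intro u1 u2 u3 hu v
    rw [hprime]
    rcases hu with ⟨h1, h2, h3⟩ | ⟨h1, h2, h3⟩
    · rw [hA1] at h1 h2 h3
      obtain ⟨-, a4, a5, a6⟩ := h1
      obtain ⟨-, b4, b5, b6⟩ := h2
      obtain ⟨-, c4, c5, c6⟩ := h3
      simp only [minorForm_four]
      simp [a4, a5, a6, b4, b5, b6,
        c4, c5, c6]
    · rw [hA2] at h1 h2 h3
      obtain ⟨-, a4, a5, a6⟩ := h1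
      obtain ⟨-, b4, b5, b6⟩ := h2
      obtain ⟨-, c4, c5, c6⟩ := h3
      simp only [minorForm_four]
      simp [a4, a5, a6, b4, b5, b6,
        c4, c5, c6]
  · intro b b' hb hb' hli
    have hm : ∀ i ∈ ({4, 5, 6} : Set (Fin 7)), e i ∈ Submodule.span k (e '' {4, 5, 6}) :=
      fun i hi => Submodule.subset_span ⟨i, hi, rfl⟩
    rw [hA1] at hb hb'
    obtain ⟨b0, b4, b5, b6⟩ := hb
    obtain ⟨d0, d4, d5, d6⟩ := hb'
    by_contra! hc
    -- Pairing with `e5 ∧ e6`, `e4 ∧ e6` and `e4 ∧ e5` isolates the three minors of `b, b'`.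
    have h12 := hc (e 5) (hm 5 (by simp)) (e 6) (hm 6 (by simp))
    have h13 := hc (e 4) (hm 4 (by simp)) (e 6) (hm 6 (by simp))
    have h23 := hc (e 4) (hm 4 (by simp)) (e 5) (hm 5 (by simp))
    rw [hprime] at h12 h13 h23
    simp only [minorForm_four] at h12 h13 h23
    simp [b4, b5, b6, d4, d5, d6]
      at h12 h13 h23
    obtain ⟨i, j, hij⟩ := exists_minor_ne_zero e hli
    apply hij
    fin_cases i <;> fin_cases j <;> simp [b0, b4, b5, b6, d0, d4, d5, d6] <;> grind
  · intro b b' hb hb' hli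
    have hm : ∀ i ∈ ({1, 2, 3} : Set (Fin 7)), e i ∈ Submodule.span k (e '' {1, 2, 3}) :=
      fun i hi => Submodule.subset_span ⟨i, hi, rfl⟩
    rw [hA2] at hb hb'
    obtain ⟨b0, b1, b2, b3⟩ := hb
    obtain ⟨d0, d1, d2, d3⟩ := hb'
    by_contra! hc
    -- Here `e1 ∧ e2`, `e1 ∧ e3` and `e2 ∧ e3` isolate the minors with indices 56, 46 and 45.
    have h12 := hc (e 1) (hm 1 (by simp)) (e 2) (hm 2 (by simp))
    have h13 := hc (e 1) (hm 1 (by simp)) (e 3) (hm 3 (by simp))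
    have h23 := hc (e 2) (hm 2 (by simp)) (e 3) (hm 3 (by simp))
    rw [hprime] at h12 h13 h23
    simp only [minorForm_four] at h12 h13 h23
    simp [b1, b2, b3, d1, d2, d3]
      at h12 h13 h23
    obtain ⟨i, j, hij⟩ := exists_minor_ne_zero e hli
    apply hij
    fin_cases i <;> fin_cases j <;> simp [b0, b1, b2, b3, d0, d1, d2, d3] <;> grind
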